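/- arXiv:2109.02547 — 2 statements merged into one kernel-verified Lean document; each statement's English description precedes it below -/
import Mathlib

section
/- Let m ≥ 2 and α > r > 0. Let z ∈ B_r(0) ⊂ ℝ^m and z′ ∈ B_r(0) ⊂ ℝ^{m+1} with ‖z‖ = ‖z′‖. Then T^{(α,m+1)}(z′) ≥ T^{(α,m)}(z), where T^{(α,m)}(z) := ∫_{B_r(0)}(α − ‖x‖) dμ^{r,m}(x) − ∫_{B_α(z) ∩ B_r(0)}(α − d(z,x)) dμ^{r,m}(x) and μ^{r,m} is the uniform probability measure on the sphere of radius r centered at the origin in ℝ^m. -/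
open MeasureTheory Metric Real
open scoped ENNReal

/-- The uniform probability measure on the sphere of radius `s` centered at the origin
in `ℝ^m`; for `s = 0` it is the Dirac measure at the origin. -/
noncomputable def sphereUniform (m : ℕ) (s : ℝ) : Measure (EuclideanSpace ℝ (Fin m)) :=
  if s = 0 then Measure.dirac 0
  else (μH[(m : ℝ) - 1] (sphere (0 : EuclideanSpace ℝ (Fin m)) s))⁻¹ •
    (μH[(m : ℝ) - 1]).restrict (sphere (0 : EuclideanSpace ℝ (Fin m)) s)

/-- `T^{(α,m)}(z) = ∫_{B_r(0)}(α − ‖x‖) dμ^{r,m}(x) − ∫_{B_α(z) ∩ B_r(0)}(α − d(z,x)) dμ^{r,m}(x)`. -/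
noncomputable def Tfun (m : ℕ) (α r : ℝ) (z : EuclideanSpace ℝ (Fin m)) : ℝ :=
  (∫ x in closedBall (0 : EuclideanSpace ℝ (Fin m)) r, (α - ‖x‖) ∂(sphereUniform m r)) -
    ∫ x in closedBall z α ∩ closedBall (0 : EuclideanSpace ℝ (Fin m)) r,
      (α - dist z x) ∂(sphereUniform m r)

/-- The sphere has positive Hausdorff measure. -/
lemma sphere_hausdorff_pos (n : ℕ) (r : ℝ) (hr : 0 < r) :
    μH[(n : ℝ)] (sphere (0 : EuclideanSpace ℝ (Fin (n + 1))) r) ≠ 0 := by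
  intro h0
  let p : EuclideanSpace ℝ (Fin (n + 1)) → (Fin n → ℝ) := fun x j => x j.succ
  have hp : LipschitzWith 1 p := by
    refine LipschitzWith.of_dist_le_mul fun x y => ?_
    rw [NNReal.coe_one, one_mul, dist_pi_le_iff dist_nonneg]
    intro j
    rw [Real.dist_eq, dist_eq_norm]
    have := PiLp.norm_apply_le (x - y) j.succ
    simpa [p] using this
  have h1 := hp.hausdorffMeasure_image_le (d := (n : ℝ)) (Nat.cast_nonneg n)
    (sphere (0 : EuclideanSpace ℝ (Fin (n + 1))) r)
  rw [h0, mul_zero] at h1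
  have hv : (μH[(n : ℝ)] : Measure (Fin n → ℝ)) = volume := by
    have := hausdorffMeasure_pi_real (ι := Fin n)
    simpa using this
  rw [hv] at h1
  have hsub : ball (0 : Fin n → ℝ) (r / (n + 1)) ⊆
      p '' (sphere (0 : EuclideanSpace ℝ (Fin (n + 1))) r) := by
    intro y hy
    have hn : (0 : ℝ) < n + 1 := by positivity
    have hy1 : ∀ j, |y j| ≤ r / (n + 1) := fun j => by
      have h2 := norm_le_pi_norm y j
      rw [mem_ball_zero_iff] at hy
      rw [Real.norm_eq_abs] at h2
      linarith
    have hs : ∑ j, (y j) ^ 2 ≤ r ^ 2 := by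
      calc ∑ j, (y j) ^ 2 ≤ ∑ _j : Fin n, (r / (n + 1)) ^ 2 := by
            refine Finset.sum_le_sum fun j _ => ?_
            rw [← sq_abs]
            exact pow_le_pow_left₀ (abs_nonneg _) (hy1 j) 2
        _ = n * (r / (n + 1)) ^ 2 := by simp
        _ ≤ r ^ 2 := by
            rw [div_pow, ← mul_div_assoc, div_le_iff₀ (by positivity)]
            have : (0 : ℝ) ≤ n := Nat.cast_nonneg n
            nlinarith [sq_nonneg r, mul_nonneg this (sq_nonneg r),
              mul_nonneg (mul_nonneg this this) (sq_nonneg r)]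
    refine ⟨WithLp.toLp 2 (Fin.cons (Real.sqrt (r ^ 2 - ∑ j, (y j) ^ 2)) y), ?_, ?_⟩
    · rw [mem_sphere_zero_iff_norm, EuclideanSpace.norm_eq]
      simp only [Fin.sum_univ_succ, Fin.cons_zero, Fin.cons_succ, Real.norm_eq_abs, sq_abs]
      rw [Real.sq_sqrt (by linarith), sub_add_cancel, Real.sqrt_sq hr.le]
    · funext j
      simp [p]
  have h3 : volume (ball (0 : Fin n → ℝ) (r / (n + 1))) ≤ 0 := (measure_mono hsub).trans h1
  have h4 : 0 < volume (ball (0 : Fin n → ℝ) (r / (n + 1))) :=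
    measure_ball_pos _ _ (by positivity)
  exact absurd h3 (not_le.mpr h4)

/-- A piece of the sphere (a graph over a coordinate hyperplane) has finite Hausdorff measure. -/
lemma sphere_piece_lt_top (n : ℕ) (r c e : ℝ) (hr : 0 < r) (hc : 0 < c) (he : |e| = 1)
    (i : Fin (n + 1)) :
    μH[(n : ℝ)] {x : EuclideanSpace ℝ (Fin (n + 1)) | ‖x‖ = r ∧ c ≤ e * x i} < ∞ := by
  set S := {x : EuclideanSpace ℝ (Fin (n + 1)) | ‖x‖ = r ∧ c ≤ e * x i} with hS
  let p : S → (Fin n → ℝ) := fun x j => x.1 (i.succAbove j)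
  let K : ℝ := n * r / c + n
  have hK : 0 ≤ K := by positivity
  have hp : AntilipschitzWith ⟨K, hK⟩ p := by
    refine AntilipschitzWith.of_le_mul_dist fun x y => ?_
    obtain ⟨x, hx, hxi⟩ := x
    obtain ⟨y, hy, hyi⟩ := y
    set d := dist (p ⟨x, hx, hxi⟩) (p ⟨y, hy, hyi⟩) with hd
    have hd0 : 0 ≤ d := dist_nonneg
    have hj : ∀ j, |x (i.succAbove j) - y (i.succAbove j)| ≤ d := fun j => by
      have := dist_le_pi_dist (p ⟨x, hx, hxi⟩) (p ⟨y, hy, hyi⟩) j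
      rwa [Real.dist_eq] at this
    have hxs : x i ^ 2 + ∑ j, x (i.succAbove j) ^ 2 = r ^ 2 := by
      rw [← hx, EuclideanSpace.norm_sq_eq, Fin.sum_univ_succAbove _ i]
      simp
    have hys : y i ^ 2 + ∑ j, y (i.succAbove j) ^ 2 = r ^ 2 := by
      rw [← hy, EuclideanSpace.norm_sq_eq, Fin.sum_univ_succAbove _ i]
      simp
    have habs : ∀ k, |x k| ≤ r ∧ |y k| ≤ r := fun k => by
      have h1 := PiLp.norm_apply_le x k
      have h2 := PiLp.norm_apply_le y k
      rw [Real.norm_eq_abs] at h1 h2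
      rw [hx] at h1; rw [hy] at h2
      exact ⟨h1, h2⟩
    have hdiff : (x i - y i) * (x i + y i) =
        ∑ j, (y (i.succAbove j) - x (i.succAbove j)) *
          (y (i.succAbove j) + x (i.succAbove j)) := by
      have : ∑ j, (y (i.succAbove j) - x (i.succAbove j)) *
          (y (i.succAbove j) + x (i.succAbove j)) =
          ∑ j, y (i.succAbove j) ^ 2 - ∑ j, x (i.succAbove j) ^ 2 := by
        rw [← Finset.sum_sub_distrib]
        exact Finset.sum_congr rfl fun j _ => by ring
      rw [this]; linarith
    have hb : |(x i - y i) * (x i + y i)| ≤ n * (d * (2 * r)) := by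
      rw [hdiff]
      calc _ ≤ ∑ j, |(y (i.succAbove j) - x (i.succAbove j)) *
          (y (i.succAbove j) + x (i.succAbove j))| := Finset.abs_sum_le_sum_abs _ _
        _ ≤ ∑ _j : Fin n, d * (2 * r) := by
            refine Finset.sum_le_sum fun j _ => ?_
            rw [abs_mul]
            refine mul_le_mul ?_ ?_ (abs_nonneg _) hd0
            · rw [abs_sub_comm]; exact hj j
            · refine (abs_add_le _ _).trans ?_
              linarith [(habs (i.succAbove j)).1, (habs (i.succAbove j)).2]
        _ = _ := by simp
    have hsum : 2 * c ≤ |x i + y i| := by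
      have : |e * (x i + y i)| = |x i + y i| := by rw [abs_mul, he, one_mul]
      rw [← this]
      refine le_trans ?_ (le_abs_self _)
      linarith
    have hi : |x i - y i| ≤ n * r / c * d := by
      rw [abs_mul] at hb
      have h2 : |x i - y i| * (2 * c) ≤ n * (d * (2 * r)) :=
        (mul_le_mul_of_nonneg_left hsum (abs_nonneg _)).trans hb
      rw [div_mul_eq_mul_div, le_div_iff₀ hc]
      linarith
    have hnorm : ‖x - y‖ ≤ ∑ k, |x k - y k| := by
      rw [EuclideanSpace.norm_eq]
      refine Real.sqrt_le_iff.mpr ⟨Finset.sum_nonneg fun _ _ => abs_nonneg _, ?_⟩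
      have := Finset.sum_sq_le_sq_sum_of_nonneg (s := Finset.univ)
        (f := fun k => |x k - y k|) (fun _ _ => abs_nonneg _)
      simpa using this
    rw [Subtype.dist_eq, dist_eq_norm]
    refine hnorm.trans ?_
    rw [Fin.sum_univ_succAbove _ i]
    have h3 : ∑ j, |x (i.succAbove j) - y (i.succAbove j)| ≤ n * d := by
      calc _ ≤ ∑ _j : Fin n, d := Finset.sum_le_sum fun j _ => hj j
        _ = _ := by simp
    change _ ≤ (n * r / c + n) * d
    linarith
  have h1 := hp.hausdorffMeasure_preimage_le (d := (n : ℝ)) (Nat.cast_nonneg n)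
    (closedBall (0 : Fin n → ℝ) r)
  have hv : (μH[(n : ℝ)] : Measure (Fin n → ℝ)) = volume := by
    have := hausdorffMeasure_pi_real (ι := Fin n)
    simpa using this
  have hpre : p ⁻¹' (closedBall (0 : Fin n → ℝ) r) = Set.univ := by
    rw [Set.eq_univ_iff_forall]
    rintro ⟨x, hx, hxi⟩
    rw [Set.mem_preimage, mem_closedBall_zero_iff, pi_norm_le_iff_of_nonneg hr.le]
    intro j
    have := PiLp.norm_apply_le x (i.succAbove j)
    rwa [hx] at this
  rw [hpre, hv] at h1
  have h2 := (isometry_subtype_coe (s := S)).hausdorffMeasure_image (d := (n : ℝ))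
    (Or.inl (Nat.cast_nonneg n)) Set.univ
  rw [Set.image_univ, Subtype.range_coe] at h2
  rw [h2]
  refine h1.trans_lt (ENNReal.mul_lt_top ?_ measure_closedBall_lt_top)
  exact ENNReal.rpow_lt_top_of_nonneg (Nat.cast_nonneg n) ENNReal.coe_ne_top

lemma sphere_hausdorff_ne_top (n : ℕ) (r : ℝ) (hr : 0 < r) :
    μH[(n : ℝ)] (sphere (0 : EuclideanSpace ℝ (Fin (n + 1))) r) ≠ ∞ := by
  have hn : (0 : ℝ) < n + 1 := by positivity
  set c : ℝ := r / (n + 1) with hc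
  have hc0 : 0 < c := by positivity
  have hsub : sphere (0 : EuclideanSpace ℝ (Fin (n + 1))) r ⊆
      ⋃ i : Fin (n + 1), ({x : EuclideanSpace ℝ (Fin (n + 1)) | ‖x‖ = r ∧ c ≤ 1 * x i} ∪
        {x : EuclideanSpace ℝ (Fin (n + 1)) | ‖x‖ = r ∧ c ≤ (-1) * x i}) := by
    intro x hx
    rw [mem_sphere_zero_iff_norm] at hx
    have : ∃ i, c ≤ |x i| := by
      by_contra! hcon
      have h1 : ‖x‖ ^ 2 < ∑ _i : Fin (n + 1), c ^ 2 := by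
        rw [EuclideanSpace.norm_sq_eq]
        refine Finset.sum_lt_sum_of_nonempty Finset.univ_nonempty fun i _ => ?_
        rw [Real.norm_eq_abs]
        exact pow_lt_pow_left₀ (hcon i) (abs_nonneg _) (by norm_num)
      rw [hx] at h1
      simp only [Finset.sum_const, Finset.card_univ, Fintype.card_fin, nsmul_eq_mul] at h1
      push_cast at h1
      have h2 : r = (n + 1) * c := by rw [hc]; field_simp
      have h3 : (0 : ℝ) ≤ n := Nat.cast_nonneg n
      rw [h2] at h1
      nlinarith [mul_pos hc0 hc0, mul_nonneg h3 (mul_pos hc0 hc0).le,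
        mul_nonneg (mul_nonneg h3 h3) (mul_pos hc0 hc0).le]
    obtain ⟨i, hi⟩ := this
    rw [Set.mem_iUnion]
    refine ⟨i, ?_⟩
    rcases le_abs.mp hi with h | h
    · left; exact ⟨hx, by linarith⟩
    · right; exact ⟨hx, by linarith⟩
  refine ne_top_of_le_ne_top ?_ ((measure_mono hsub).trans (measure_iUnion_fintype_le _ _))
  refine (ENNReal.sum_lt_top.mpr fun i _ => ?_).ne
  refine (measure_union_le _ _).trans_lt (ENNReal.add_lt_top.mpr ⟨?_, ?_⟩)
  · exact sphere_piece_lt_top n r c 1 hr hc0 (by simp) i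
  · exact sphere_piece_lt_top n r c (-1) hr hc0 (by simp) i

lemma sphereUniform_eq (m : ℕ) (r : ℝ) (hr : 0 < r) :
    sphereUniform m r = (μH[(m : ℝ) - 1] (sphere (0 : EuclideanSpace ℝ (Fin m)) r))⁻¹ •
    (μH[(m : ℝ) - 1]).restrict (sphere (0 : EuclideanSpace ℝ (Fin m)) r) := by
  rw [sphereUniform, if_neg hr.ne']

lemma sphereUniform_prob (m : ℕ) (hm : 1 ≤ m) (r : ℝ) (hr : 0 < r) :
    IsProbabilityMeasure (sphereUniform m r) := by
  obtain ⟨n, rfl⟩ : ∃ n, m = n + 1 := ⟨m - 1, by omega⟩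
  constructor
  have hcast : (((n + 1 : ℕ) : ℝ) - 1) = n := by push_cast; ring
  rw [sphereUniform_eq _ _ hr, hcast, Measure.smul_apply, Measure.restrict_apply_univ,
    smul_eq_mul]
  exact ENNReal.inv_mul_cancel (sphere_hausdorff_pos n r hr) (sphere_hausdorff_ne_top n r hr)

lemma sphereUniform_ae (m : ℕ) (r : ℝ) (hr : 0 < r) :
    ∀ᵐ x ∂(sphereUniform m r), ‖x‖ = r := by
  rw [sphereUniform_eq _ _ hr]
  refine Measure.ae_smul_measure ?_ _
  filter_upwards [ae_restrict_mem isClosed_sphere.measurableSet] with x hx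
  exact mem_sphere_zero_iff_norm.mp hx

lemma sphereUniform_invariant (m : ℕ) (r : ℝ) (hr : 0 < r)
    (L : EuclideanSpace ℝ (Fin m) ≃ₗᵢ[ℝ] EuclideanSpace ℝ (Fin m))
    (g : EuclideanSpace ℝ (Fin m) → ℝ) :
    ∫ x, g (L x) ∂(sphereUniform m r) = ∫ x, g x ∂(sphereUniform m r) := by
  let e : EuclideanSpace ℝ (Fin m) ≃ᵐ EuclideanSpace ℝ (Fin m) :=
    L.toHomeomorph.toMeasurableEquiv
  have hmap : Measure.map e (sphereUniform m r) = sphereUniform m r := by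
    rw [sphereUniform_eq _ _ hr, Measure.map_smul]
    congr 1
    have hpre : e ⁻¹' (sphere (0 : EuclideanSpace ℝ (Fin m)) r) = sphere 0 r := by
      ext x
      simp [e]
    conv_lhs => rw [← hpre]
    rw [← MeasurableEquiv.restrict_map]
    congr 1
    exact L.toIsometryEquiv.map_hausdorffMeasure _
  conv_rhs => rw [← hmap]
  rw [integral_map_equiv]
  rfl

lemma sphereUniform_inner (m : ℕ) (r : ℝ) (hr : 0 < r) (u v : EuclideanSpace ℝ (Fin m))
    (huv : ‖u‖ = ‖v‖) (φ : ℝ → ℝ) :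
    ∫ x, φ (inner ℝ u x) ∂(sphereUniform m r) = ∫ x, φ (inner ℝ v x) ∂(sphereUniform m r) := by
  let L := (ℝ ∙ (u - v))ᗮ.reflection
  have hL : L u = v := Submodule.reflection_sub huv
  rw [← sphereUniform_invariant m r hr L (fun x => φ (inner ℝ v x))]
  refine integral_congr_ae (Filter.Eventually.of_forall fun x => ?_)
  simp only
  rw [← hL, L.inner_map_map]

/-- The radial profile. -/
noncomputable def prof (α r t s : ℝ) : ℝ := max 0 (α - Real.sqrt (r ^ 2 + t ^ 2 - 2 * s))

lemma prof_continuous (α r t : ℝ) : Continuous (prof α r t) := by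
  unfold prof; fun_prop

lemma prof_bound (α r t s : ℝ) (hα : 0 < α) : ‖prof α r t s‖ ≤ α := by
  unfold prof
  rw [Real.norm_eq_abs, abs_of_nonneg (le_max_left _ _)]
  exact max_le hα.le (by linarith [Real.sqrt_nonneg (r ^ 2 + t ^ 2 - 2 * s)])

lemma Tfun_eq (m : ℕ) (hm : 1 ≤ m) (α r : ℝ) (hr : 0 < r) (z : EuclideanSpace ℝ (Fin m)) :
    Tfun m α r z = (α - r) -
      ∫ x, prof α r ‖z‖ (inner ℝ z x) ∂(sphereUniform m r) := by
  have := sphereUniform_prob m hm r hr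
  have hae := sphereUniform_ae m r hr
  unfold Tfun
  congr 1
  · rw [← integral_indicator isClosed_closedBall.measurableSet]
    have : ∫ x, (closedBall (0 : EuclideanSpace ℝ (Fin m)) r).indicator
        (fun x => α - ‖x‖) x ∂(sphereUniform m r) = ∫ _x, (α - r) ∂(sphereUniform m r) := by
      refine integral_congr_ae ?_
      filter_upwards [hae] with x hx
      rw [Set.indicator_of_mem (mem_closedBall_zero_iff.mpr hx.le), hx]
    rw [this]
    simp
  · rw [← integral_indicator
      (isClosed_closedBall.measurableSet.inter isClosed_closedBall.measurableSet)]
    refine integral_congr_ae ?_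
    filter_upwards [hae] with x hx
    have hd : dist z x = Real.sqrt (r ^ 2 + ‖z‖ ^ 2 - 2 * inner ℝ z x) := by
      rw [dist_eq_norm, ← Real.sqrt_sq (norm_nonneg (z - x)), norm_sub_sq_real, hx]
      congr 1; ring
    unfold prof
    rw [← hd]
    by_cases h : dist z x ≤ α
    · have hmem : x ∈ closedBall z α ∩ closedBall (0 : EuclideanSpace ℝ (Fin m)) r :=
        ⟨by rwa [mem_closedBall, dist_comm], mem_closedBall_zero_iff.mpr hx.le⟩
      rw [Set.indicator_of_mem hmem, max_eq_right (by linarith)]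
    · rw [Set.indicator_of_notMem, max_eq_left (by linarith)]
      rintro ⟨h1, -⟩
      rw [mem_closedBall, dist_comm] at h1
      exact h h1

lemma prof_convexOn (α r t : ℝ) : ConvexOn ℝ (Set.Icc (-(r * t)) (r * t)) (prof α r t) := by
  refine ⟨convex_Icc _ _, ?_⟩
  intro x hx y hy a b ha hb hab
  have h1 : ∀ w ∈ Set.Icc (-(r * t)) (r * t), (0 : ℝ) ≤ r ^ 2 + t ^ 2 - 2 * w := fun w hw => by
    nlinarith [sq_nonneg (r - t), hw.2]
  have h2 := Real.strictConcaveOn_sqrt.concaveOn.2 (Set.mem_Ici.mpr (h1 x hx))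
    (Set.mem_Ici.mpr (h1 y hy)) ha hb hab
  simp only [smul_eq_mul] at h2 ⊢
  have h3 : a * (r ^ 2 + t ^ 2 - 2 * x) + b * (r ^ 2 + t ^ 2 - 2 * y) =
      r ^ 2 + t ^ 2 - 2 * (a * x + b * y) := by
    linear_combination (r ^ 2 + t ^ 2) * hab
  rw [h3] at h2
  unfold prof
  have hx0 := mul_le_mul_of_nonneg_left
    (le_max_left 0 (α - Real.sqrt (r ^ 2 + t ^ 2 - 2 * x))) ha
  have hy0 := mul_le_mul_of_nonneg_left
    (le_max_left 0 (α - Real.sqrt (r ^ 2 + t ^ 2 - 2 * y))) hb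
  have hx1 := mul_le_mul_of_nonneg_left
    (le_max_right 0 (α - Real.sqrt (r ^ 2 + t ^ 2 - 2 * x))) ha
  have hy1 := mul_le_mul_of_nonneg_left
    (le_max_right 0 (α - Real.sqrt (r ^ 2 + t ^ 2 - 2 * y))) hb
  have hα : α = a * α + b * α := by rw [← add_mul, hab, one_mul]
  refine max_le (by linarith) (by linarith)

lemma prof_symm_le (α r t c s : ℝ) (hc0 : 0 ≤ c) (hc1 : c ≤ 1) (hs : |s| ≤ r * t) :
    prof α r t (c * s) + prof α r t (-(c * s)) ≤ prof α r t s + prof α r t (-s) := by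
  obtain ⟨hs1, hs2⟩ := abs_le.mp hs
  have hc := prof_convexOn α r t
  have m1 : s ∈ Set.Icc (-(r * t)) (r * t) := ⟨hs1, hs2⟩
  have m2 : -s ∈ Set.Icc (-(r * t)) (r * t) := ⟨by linarith, by linarith⟩
  have h1 := hc.2 m1 m2 (show 0 ≤ (1 + c) / 2 by linarith) (show 0 ≤ (1 - c) / 2 by linarith)
    (by ring)
  have h2 := hc.2 m1 m2 (show 0 ≤ (1 - c) / 2 by linarith) (show 0 ≤ (1 + c) / 2 by linarith)
    (by ring)
  simp only [smul_eq_mul] at h1 h2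
  have e1 : (1 + c) / 2 * s + (1 - c) / 2 * -s = c * s := by ring
  have e2 : (1 - c) / 2 * s + (1 + c) / 2 * -s = -(c * s) := by ring
  rw [e1] at h1
  rw [e2] at h2
  linarith

lemma prof_integrable (m : ℕ) (hm : 1 ≤ m) (α r t : ℝ) (hr : 0 < r) (hα : 0 < α)
    (u : EuclideanSpace ℝ (Fin m)) :
    Integrable (fun x => prof α r t (inner ℝ u x)) (sphereUniform m r) := by
  have := sphereUniform_prob m hm r hr
  refine Integrable.of_bound ?_ α (Filter.Eventually.of_forall fun x => prof_bound _ _ _ _ hα)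
  exact ((prof_continuous α r t).comp (by fun_prop)).aestronglyMeasurable

/-- Shrinking the direction vector decreases the integral. -/
lemma prof_shrink (m : ℕ) (hm : 1 ≤ m) (α r : ℝ) (hr : 0 < r) (hα : 0 < α)
    (z : EuclideanSpace ℝ (Fin m)) (c : ℝ) (hc0 : 0 ≤ c) (hc1 : c ≤ 1) :
    ∫ y, prof α r ‖z‖ (inner ℝ (c • z) y) ∂(sphereUniform m r) ≤
      ∫ y, prof α r ‖z‖ (inner ℝ z y) ∂(sphereUniform m r) := by
  have hI := prof_integrable m hm α r ‖z‖ hr hα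
  have e1 := sphereUniform_inner m r hr (c • z) (-(c • z)) (norm_neg _).symm (prof α r ‖z‖)
  have e2 := sphereUniform_inner m r hr z (-z) (norm_neg _).symm (prof α r ‖z‖)
  have key : ∫ y, (prof α r ‖z‖ (inner ℝ (c • z) y) + prof α r ‖z‖ (inner ℝ (-(c • z)) y))
        ∂(sphereUniform m r) ≤
      ∫ y, (prof α r ‖z‖ (inner ℝ z y) + prof α r ‖z‖ (inner ℝ (-z) y))
        ∂(sphereUniform m r) := by
    refine integral_mono_ae ((hI _).add (hI _)) ((hI _).add (hI _)) ?_
    filter_upwards [sphereUniform_ae m r hr] with y hy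
    simp only [inner_neg_left, real_inner_smul_left]
    refine prof_symm_le α r ‖z‖ c _ hc0 hc1 ?_
    have := abs_real_inner_le_norm z y
    rw [hy] at this
    linarith
  rw [integral_add (hI _) (hI _), integral_add (hI _) (hI _), ← e1, ← e2] at key
  linarith

/-- Drop the last coordinate. -/
noncomputable def dropLast (m : ℕ) (x : EuclideanSpace ℝ (Fin (m + 1))) :
    EuclideanSpace ℝ (Fin m) := WithLp.toLp 2 (fun i => x i.castSucc)

/-- Append a zero coordinate. -/
noncomputable def appendZero (m : ℕ) (x : EuclideanSpace ℝ (Fin m)) :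
    EuclideanSpace ℝ (Fin (m + 1)) := WithLp.toLp 2 (Fin.snoc (α := fun _ => ℝ) (fun i => x i) 0)

lemma dropLast_continuous (m : ℕ) : Continuous (dropLast m) := by
  unfold dropLast; fun_prop

lemma norm_appendZero (m : ℕ) (x : EuclideanSpace ℝ (Fin m)) : ‖appendZero m x‖ = ‖x‖ := by
  rw [EuclideanSpace.norm_eq, EuclideanSpace.norm_eq, Fin.sum_univ_castSucc]
  simp [appendZero]

lemma norm_dropLast_le (m : ℕ) (x : EuclideanSpace ℝ (Fin (m + 1))) :
    ‖dropLast m x‖ ≤ ‖x‖ := by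
  rw [EuclideanSpace.norm_eq, EuclideanSpace.norm_eq, Fin.sum_univ_castSucc]
  refine Real.sqrt_le_sqrt ?_
  simp only [dropLast]
  linarith [sq_nonneg ‖x (Fin.last m)‖]

lemma inner_appendZero (m : ℕ) (w : EuclideanSpace ℝ (Fin m))
    (x : EuclideanSpace ℝ (Fin (m + 1))) :
    inner ℝ (appendZero m w) x = inner ℝ w (dropLast m x) := by
  simp [PiLp.inner_apply, Fin.sum_univ_castSucc, appendZero, dropLast]

lemma prof_compare (m : ℕ) (hm : 1 ≤ m) (α r : ℝ) (hr : 0 < r) (hα : 0 < α)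
    (z : EuclideanSpace ℝ (Fin m)) (z' : EuclideanSpace ℝ (Fin (m + 1))) (hz : ‖z‖ = ‖z'‖) :
    ∫ x, prof α r ‖z‖ (inner ℝ z' x) ∂(sphereUniform (m + 1) r) ≤
      ∫ y, prof α r ‖z‖ (inner ℝ z y) ∂(sphereUniform m r) := by
  have := sphereUniform_prob m hm r hr
  have := sphereUniform_prob (m + 1) (by omega) r hr
  set t := ‖z‖ with ht
  have ht0 : 0 ≤ t := norm_nonneg z
  set I := ∫ x, prof α r t (inner ℝ z' x) ∂(sphereUniform (m + 1) r) with hI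
  have h1 : ∀ y : EuclideanSpace ℝ (Fin m), ‖y‖ = r →
      ∫ x, prof α r t (t / r * inner ℝ y (dropLast m x)) ∂(sphereUniform (m + 1) r) = I := by
    intro y hy
    have hn : ‖appendZero m ((t / r) • y)‖ = ‖z'‖ := by
      rw [norm_appendZero, norm_smul, hy, Real.norm_eq_abs, abs_of_nonneg (by positivity),
        div_mul_cancel₀ _ hr.ne', ← hz]
    rw [hI, ← sphereUniform_inner (m + 1) r hr _ _ hn]
    simp only [inner_appendZero, real_inner_smul_left]
  have h2 : ∫ y, (∫ x, prof α r t (t / r * inner ℝ y (dropLast m x))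
      ∂(sphereUniform (m + 1) r)) ∂(sphereUniform m r) = I := by
    rw [integral_congr_ae (g := fun _ => I)]
    · simp
    · filter_upwards [sphereUniform_ae m r hr] with y hy using h1 y hy
  have hint : Integrable (Function.uncurry fun (y : EuclideanSpace ℝ (Fin m))
      (x : EuclideanSpace ℝ (Fin (m + 1))) => prof α r t (t / r * inner ℝ y (dropLast m x)))
      ((sphereUniform m r).prod (sphereUniform (m + 1) r)) := by
    refine Integrable.of_bound ?_ α (Filter.Eventually.of_forall fun x => prof_bound _ _ _ _ hα)
    refine Continuous.aestronglyMeasurable ?_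
    refine (prof_continuous α r t).comp (continuous_const.mul ?_)
    exact continuous_fst.inner ((dropLast_continuous m).comp continuous_snd)
  have hswap := integral_integral_swap hint
  rw [← h2, hswap]
  have hfin : ∫ _x, (∫ y, prof α r t (inner ℝ z y) ∂(sphereUniform m r))
      ∂(sphereUniform (m + 1) r) = ∫ y, prof α r t (inner ℝ z y) ∂(sphereUniform m r) := by
    simp
  rw [← hfin]
  refine integral_mono_ae hint.integral_prod_right (integrable_const _) ?_
  filter_upwards [sphereUniform_ae (m + 1) r hr] with x hx
  have hle : ‖dropLast m x‖ ≤ r := hx ▸ norm_dropLast_le m x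
  have hn : ‖(t / r) • dropLast m x‖ = ‖(‖dropLast m x‖ / r) • z‖ := by
    rw [norm_smul, norm_smul, Real.norm_eq_abs, Real.norm_eq_abs,
      abs_of_nonneg (by positivity), abs_of_nonneg (by positivity), ← ht]
    ring
  have e := sphereUniform_inner m r hr _ _ hn (prof α r t)
  have hs := prof_shrink m hm α r hr hα z (‖dropLast m x‖ / r) (by positivity)
    ((div_le_one hr).mpr hle)
  rw [← ht, ← e] at hs
  refine le_trans (le_of_eq ?_) hs
  refine integral_congr_ae (Filter.Eventually.of_forall fun y => ?_)
  simp only [real_inner_smul_left]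
  rw [real_inner_comm]

/-- For `m ≥ 2`, `α > r > 0`, `z ∈ B_r(0) ⊂ ℝ^m` and `z′ ∈ B_r(0) ⊂ ℝ^{m+1}` with
`‖z‖ = ‖z′‖`, one has `T^{(α,m+1)}(z′) ≥ T^{(α,m)}(z)`. -/
theorem stmt10 (m : ℕ) (hm : 2 ≤ m) (r α : ℝ) (hr : 0 < r) (hα : r < α)
    (z : EuclideanSpace ℝ (Fin m)) (z' : EuclideanSpace ℝ (Fin (m + 1)))
    (hz : z ∈ closedBall (0 : EuclideanSpace ℝ (Fin m)) r)
    (hz' : z' ∈ closedBall (0 : EuclideanSpace ℝ (Fin (m + 1))) r)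
    (hnorm : ‖z‖ = ‖z'‖) :
    Tfun m α r z ≤ Tfun (m + 1) α r z' := by
  rw [Tfun_eq m (by omega) α r hr z, Tfun_eq (m + 1) (by omega) α r hr z', ← hnorm]
  have := prof_compare m (by omega) α r hr (hr.trans hα) z z' hnorm
  linarith
end

section
/- Let m ≥ 2, r > 0, ε ∈ (0,1), and α = r(1+ε). Let z ∈ B_r(0) ⊂ ℝ^m with ‖z‖ ≥ εr. Then T^{(α,m)}(z) ≥ rε²/8 − r·√(πm/2)·(1 − ε²/16)^{(m-2)/2}, where T^{(α,m)}(z) := ∫_{B_r(0)}(α − ‖x‖) dμ^r(x) − ∫_{B_α(z) ∩ B_r(0)}(α − d(z,x)) dμ^r(x) and μ^r is the uniform probability measure on the sphere of radius r centered at the origin. -/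
open MeasureTheory Metric Real
open scoped ENNReal

lemma sphere_finite (n : ℕ) (r : ℝ) (hr : 0 < r) :
    μH[(n : ℝ)] (sphere (0 : EuclideanSpace ℝ (Fin (n+1))) r) < ∞ := by
  let ψ : Fin (n+1) → (Fin n → ℝ) → EuclideanSpace ℝ (Fin (n+1)) :=
    fun i y => WithLp.toLp 2 (Fin.insertNth (α := fun _ => ℝ) i (1:ℝ) y)
  let φ : Fin (n+1) → ℝ → (Fin n → ℝ) → EuclideanSpace ℝ (Fin (n+1)) :=
    fun i s y => (s * ‖ψ i y‖⁻¹) • ψ i y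
  have hψ : ∀ i, ContDiff ℝ 1 (ψ i) := by
    intro i
    rw [contDiff_euclidean, i.forall_iff_succAbove]
    refine ⟨?_, fun j => ?_⟩
    · simp only [ψ, Fin.insertNth_apply_same]; fun_prop
    · simp only [ψ, Fin.insertNth_apply_succAbove]; fun_prop
  have hψ0 : ∀ i y, ψ i y ≠ 0 := by
    intro i y h
    have := congrArg (fun v : EuclideanSpace ℝ (Fin (n+1)) => v i) h
    simp [ψ] at this
  have hφ : ∀ i s, ContDiff ℝ 1 (φ i s) := by
    intro i s
    have h1 : ContDiff ℝ 1 (fun y => ‖ψ i y‖) := (hψ i).norm ℝ (hψ0 i)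
    have h2 : ContDiff ℝ 1 (fun y => ‖ψ i y‖⁻¹) := h1.inv (fun y => norm_ne_zero_iff.2 (hψ0 i y))
    exact (contDiff_const.mul h2).smul (hψ i)
  let K : Set (Fin n → ℝ) := Set.Icc (fun _ => -1) (fun _ => 1)
  have hK : IsCompact K := isCompact_Icc
  have hfin : ∀ i s, μH[(n : ℝ)] (φ i s '' K) < ∞ := by
    intro i s
    obtain ⟨C, hC⟩ := ((hφ i s).locallyLipschitz.locallyLipschitzOn (s := K)).exists_lipschitzOnWith_of_compact hK
    have := hC.hausdorffMeasure_image_le (d := (n:ℝ)) (by positivity)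
    refine this.trans_lt ?_
    have h3 : (μH[(n:ℝ)] : Measure (Fin n → ℝ)) = volume := by
      have := hausdorffMeasure_pi_real (ι := Fin n)
      simpa using this
    rw [h3]
    exact ENNReal.mul_lt_top (by finiteness) hK.measure_lt_top
  have hsub : sphere (0 : EuclideanSpace ℝ (Fin (n+1))) r ⊆ ⋃ i, (φ i r '' K ∪ φ i (-r) '' K) := by
    intro x hx
    have hx : ‖x‖ = r := by simpa using hx
    obtain ⟨i, hi⟩ := Finite.exists_max (fun i => |x i|)
    have hxi : x i ≠ 0 := by
      intro h0
      have : x = 0 := by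
        ext j
        have := hi j
        simp [h0] at this
        simpa using this
      rw [this, norm_zero] at hx; linarith
    have hxi' : 0 < |x i| := abs_pos.2 hxi
    have e1 : ψ i (fun j => x (i.succAbove j) / x i) = (x i)⁻¹ • x := by
      ext k
      revert k
      rw [i.forall_iff_succAbove]
      constructor
      · simp [ψ, hxi]
      · intro j; simp [ψ, div_eq_inv_mul]
    have hmem : (fun j => x (i.succAbove j) / x i) ∈ K := by
      have : ∀ j, |x (i.succAbove j) / x i| ≤ 1 := by
        intro j; rw [abs_div, div_le_one hxi']; exact hi _
      exact ⟨fun j => (abs_le.1 (this j)).1, fun j => (abs_le.1 (this j)).2⟩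
    rw [Set.mem_iUnion]
    refine ⟨i, ?_⟩
    have hn : ‖ψ i (fun j => x (i.succAbove j) / x i)‖ = |x i|⁻¹ * r := by
      rw [e1, norm_smul, hx]; simp
    rcases lt_or_gt_of_ne hxi with h | h
    · right
      refine ⟨_, hmem, ?_⟩
      simp only [φ]
      rw [hn, e1, smul_smul, abs_of_neg h]
      convert one_smul ℝ x using 2
      field_simp
    · left
      refine ⟨_, hmem, ?_⟩
      simp only [φ]
      rw [hn, e1, smul_smul, abs_of_pos h]
      convert one_smul ℝ x using 2
      field_simp
  refine (measure_mono hsub).trans_lt ?_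
  refine (measure_iUnion_le _).trans_lt ?_
  rw [tsum_fintype]
  exact ENNReal.sum_lt_top.2 fun i _ => measure_union_lt_top (hfin _ _) (hfin _ _)

lemma sphere_pos (n : ℕ) (r : ℝ) (hr : 0 < r) :
    0 < μH[(n : ℝ)] (sphere (0 : EuclideanSpace ℝ (Fin (n+1))) r) := by
  let p : EuclideanSpace ℝ (Fin (n+1)) → (Fin n → ℝ) := fun x j => x j.succ
  have hp : LipschitzWith 1 p := by
    refine LipschitzWith.of_dist_le_mul fun x y => ?_
    rw [dist_pi_le_iff (by positivity)]
    intro j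
    have := PiLp.norm_apply_le (x - y) j.succ
    simpa [p, dist_eq_norm] using this
  let U : Set (Fin n → ℝ) := {y | ∑ j, y j ^ 2 < r ^ 2}
  have hU : IsOpen U := isOpen_lt (by fun_prop) continuous_const
  have hU0 : U.Nonempty := ⟨0, by simp [U]; positivity⟩
  have hsub : U ⊆ p '' sphere (0 : EuclideanSpace ℝ (Fin (n+1))) r := by
    intro y hy
    have hy : ∑ j, y j ^ 2 < r ^ 2 := hy
    refine ⟨WithLp.toLp 2 (Fin.cons (√(r^2 - ∑ j, y j ^ 2)) y), ?_, ?_⟩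
    · rw [mem_sphere_zero_iff_norm, EuclideanSpace.norm_eq, Fin.sum_univ_succ]
      simp only [Fin.cons_zero, Fin.cons_succ, Real.norm_eq_abs, sq_abs]
      rw [Real.sq_sqrt (by linarith), sub_add_cancel, Real.sqrt_sq hr.le]
    · ext j; simp [p]
  have h3 : (μH[(n:ℝ)] : Measure (Fin n → ℝ)) = volume := by
    have := hausdorffMeasure_pi_real (ι := Fin n)
    simpa using this
  have h1 : 0 < μH[(n:ℝ)] U := by rw [h3]; exact hU.measure_pos _ hU0
  have h2 := (hp.lipschitzOnWith (s := sphere 0 r)).hausdorffMeasure_image_le (d := (n:ℝ)) (by positivity)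
  simp only [ENNReal.coe_one, ENNReal.one_rpow, one_mul] at h2
  exact (h1.trans_le (measure_mono hsub)).trans_le h2

lemma sphereUniform_inv (m : ℕ) (r : ℝ) (hr : 0 < r)
    (L : EuclideanSpace ℝ (Fin m) ≃ₗᵢ[ℝ] EuclideanSpace ℝ (Fin m)) :
    MeasurePreserving L (sphereUniform m r) (sphereUniform m r) := by
  rw [sphereUniform, if_neg hr.ne']
  refine MeasurePreserving.smul_measure ?_ _
  have h := (IsometryEquiv.measurePreserving_hausdorffMeasure L.toIsometryEquiv
    ((m:ℝ) - 1)).restrict_preimage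
    (s := sphere (0 : EuclideanSpace ℝ (Fin m)) r) isClosed_sphere.measurableSet
  have e : L.toIsometryEquiv ⁻¹' sphere (0 : EuclideanSpace ℝ (Fin m)) r = sphere 0 r := by
    ext x; simp
  rw [e] at h
  exact h

lemma cap_const (m : ℕ) (r : ℝ) (hr : 0 < r) (c : ℝ)
    (y z : EuclideanSpace ℝ (Fin m)) (hy : y ≠ 0) (hz : z ≠ 0) :
    sphereUniform m r {x | c * ‖y‖ < inner ℝ x y} = sphereUniform m r {x | c * ‖z‖ < inner ℝ x z} := by
  have hy0 := norm_pos_iff.2 hy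
  have hz0 := norm_pos_iff.2 hz
  set k := ‖z‖ / ‖y‖ with hk
  have hk0 : 0 < k := by positivity
  have hn : ‖z‖ = ‖k • y‖ := by
    rw [norm_smul, Real.norm_of_nonneg hk0.le, hk]; field_simp
  have e1 : {x : EuclideanSpace ℝ (Fin m) | c * ‖y‖ < inner ℝ x y} =
      {x | c * ‖k • y‖ < inner ℝ x (k • y)} := by
    ext x
    simp only [Set.mem_setOf_eq]
    rw [inner_smul_right, norm_smul, Real.norm_of_nonneg hk0.le, mul_left_comm,
      mul_lt_mul_iff_right₀ hk0]
  rw [e1]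
  set L := (ℝ ∙ (z - k • y))ᗮ.reflection with hL
  have hLz : L z = k • y := Submodule.reflection_sub hn
  have hmeas : MeasurableSet {x : EuclideanSpace ℝ (Fin m) | c * ‖k • y‖ < inner ℝ x (k • y)} :=
    (isOpen_lt continuous_const (by fun_prop)).measurableSet
  rw [← (sphereUniform_inv m r hr L).measure_preimage hmeas.nullMeasurableSet]
  congr 1
  ext x
  simp only [Set.mem_preimage, Set.mem_setOf_eq]
  rw [← hLz, L.inner_map_map, L.norm_map]

lemma cap_bound (m : ℕ) (hm : 1 ≤ m) (r : ℝ) (hr : 0 < r) (t : ℝ) (ht : 0 ≤ t) (ht2 : 2 * t ^ 2 ≤ 1)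
    (z : EuclideanSpace ℝ (Fin m)) (hz : z ≠ 0) :
    sphereUniform m r {x | t * r * ‖z‖ < inner ℝ x z} ≤ ENNReal.ofReal (√(1 - t ^ 2) ^ m) := by
  have := sphereUniform_prob m hm r hr
  have : Nontrivial (EuclideanSpace ℝ (Fin m)) := ⟨z, 0, hz⟩
  set σ := sphereUniform m r with hσ
  set B := closedBall (0 : EuclideanSpace ℝ (Fin m)) 1 with hB
  set ν : Measure (EuclideanSpace ℝ (Fin m)) := volume.restrict B with hν
  set A : Set (EuclideanSpace ℝ (Fin m) × EuclideanSpace ℝ (Fin m)) :=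
    {q | t * r * ‖q.2‖ < inner ℝ q.1 q.2} with hA
  have hAm : MeasurableSet A := (isOpen_lt (by fun_prop) (by fun_prop)).measurableSet
  have hBfin : volume B ≠ ∞ := (isCompact_closedBall _ _).measure_lt_top.ne
  have hBpos : volume B ≠ 0 := (measure_closedBall_pos volume _ one_pos).ne'
  have : IsFiniteMeasure ν := ⟨by rw [hν, Measure.restrict_apply_univ]; exact hBfin.lt_top⟩
  set p := σ {x | t * r * ‖z‖ < inner ℝ x z} with hp
  have h1 : (σ.prod ν) A = p * volume B := by
    rw [Measure.prod_apply_symm hAm]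
    have : ∀ᵐ y ∂ν, σ ((fun x => (x, y)) ⁻¹' A) = p := by
      have h0 : ∀ᵐ y ∂ν, y ≠ 0 := by
        refine ae_restrict_of_ae ?_
        simp [ae_iff]
      filter_upwards [h0] with y hy
      exact cap_const m r hr (t * r) y z hy hz
    rw [lintegral_congr_ae this, lintegral_const, hν, Measure.restrict_apply_univ]
  have h2 : (σ.prod ν) A ≤ ENNReal.ofReal (√(1 - t ^ 2) ^ m) * volume B := by
    rw [Measure.prod_apply hAm]
    calc ∫⁻ x, ν (Prod.mk x ⁻¹' A) ∂σ ≤ ∫⁻ x, ENNReal.ofReal (√(1 - t ^ 2) ^ m) * volume B ∂σ := by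
          refine lintegral_mono_ae ?_
          filter_upwards [sphereUniform_ae m r hr] with x hx
          rw [hν, Measure.restrict_apply (measurable_prodMk_left hAm)]
          have hsub : Prod.mk x ⁻¹' A ∩ B ⊆ closedBall ((t / r) • x) √(1 - t ^ 2) := by
            rintro y ⟨hy1, hy2⟩
            have hy1 : t * r * ‖y‖ < inner ℝ x y := hy1
            have hy2 : ‖y‖ ≤ 1 := by simpa [hB] using hy2
            rw [mem_closedBall, dist_eq_norm]
            refine Real.le_sqrt_of_sq_le ?_
            rw [norm_sub_sq_real, inner_smul_right, norm_smul, hx, Real.norm_of_nonneg (by positivity),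
              real_inner_comm]
            have e : t / r * r = t := by field_simp
            rw [e]
            have h3 : t ^ 2 * ‖y‖ ≤ t / r * inner ℝ x y := by
              calc t ^ 2 * ‖y‖ = t / r * (t * r * ‖y‖) := by field_simp
                _ ≤ _ := by gcongr
            nlinarith [norm_nonneg y, mul_nonneg (sub_nonneg.2 hy2) (by linarith [norm_nonneg y] : 0 ≤ ‖y‖ + (1 - 2 * t ^ 2))]
          refine (measure_mono hsub).trans ?_
          rw [Measure.addHaar_closedBall' _ _ (Real.sqrt_nonneg _)]
          simp [hB]
      _ = _ := by simp
  rw [h1] at h2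
  exact (ENNReal.mul_le_mul_iff_left hBpos hBfin).1 h2

/-- For `m ≥ 2`, `r > 0`, `ε ∈ (0,1)`, `α = r(1+ε)` and `z ∈ B_r(0)` with `‖z‖ ≥ εr`,
`T^{(α,m)}(z) ≥ rε²/8 − r √(πm/2) (1 − ε²/16)^{(m−2)/2}`. -/
theorem stmt11 (m : ℕ) (hm : 2 ≤ m) (r ε : ℝ) (hr : 0 < r) (hε : ε ∈ Set.Ioo (0 : ℝ) 1)
    (z : EuclideanSpace ℝ (Fin m)) (hz : z ∈ closedBall (0 : EuclideanSpace ℝ (Fin m)) r)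
    (hzε : ε * r ≤ ‖z‖) :
    r * ε ^ 2 / 8 -
        r * Real.sqrt (π * m / 2) * (1 - ε ^ 2 / 16) ^ (((m : ℝ) - 2) / 2) ≤
      Tfun m (r * (1 + ε)) r z := by
  obtain ⟨hε0, hε1⟩ := hε
  have hz0 : 0 < ‖z‖ := lt_of_lt_of_le (by positivity) hzε
  have hzne : z ≠ 0 := norm_pos_iff.1 hz0
  have hprob := sphereUniform_prob m (by omega) r hr
  have hae := sphereUniform_ae m r hr
  have hcap := cap_bound m (by omega) r hr (ε / 4) (by positivity) (by nlinarith) z hzne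
  rw [Tfun]
  set σ := sphereUniform m r with hσ
  set C : Set (EuclideanSpace ℝ (Fin m)) := {x | ε / 4 * r * ‖z‖ < inner ℝ x z} with hC
  have hCm : MeasurableSet C := (isOpen_lt continuous_const (by fun_prop)).measurableSet
  set p := σ.real C with hp
  have hp0 : 0 ≤ p := measureReal_nonneg
  have hpb : p ≤ √(1 - (ε / 4) ^ 2) ^ m :=
    ENNReal.toReal_le_of_le_ofReal (by positivity) hcap
  have hq0 : 0 < 1 - ε ^ 2 / 16 := by nlinarith
  have hpb2 : p ≤ (1 - ε ^ 2 / 16) ^ (((m : ℝ) - 2) / 2) := by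
    refine hpb.trans ?_
    have e : 1 - (ε / 4) ^ 2 = 1 - ε ^ 2 / 16 := by ring
    rw [e, Real.sqrt_eq_rpow, ← Real.rpow_natCast, ← Real.rpow_mul hq0.le]
    exact Real.rpow_le_rpow_of_exponent_ge hq0 (by nlinarith) (by linarith)
  have hsq : 9 / 8 ≤ √(π * m / 2) := by
    refine Real.le_sqrt_of_sq_le ?_
    have : (2 : ℝ) ≤ m := by exact_mod_cast hm
    nlinarith [Real.pi_gt_three]
  have hI1 : ∫ x in closedBall (0 : EuclideanSpace ℝ (Fin m)) r, (r * (1 + ε) - ‖x‖) ∂σ = r * ε := by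
    rw [Measure.restrict_eq_self_of_ae_mem (by filter_upwards [hae] with x hx; simp [hx])]
    rw [integral_congr_ae (g := fun _ => r * ε) (by filter_upwards [hae] with x hx; rw [hx]; ring)]
    simp
  have hI2 : ∫ x in closedBall z (r * (1 + ε)) ∩ closedBall (0 : EuclideanSpace ℝ (Fin m)) r,
      (r * (1 + ε) - dist z x) ∂σ ≤ (r * ε - r * ε ^ 2 / 8) + p * (r + r * ε ^ 2 / 8) := by
    rw [← integral_indicator (isClosed_closedBall.inter isClosed_closedBall).measurableSet]
    have hCint : Integrable (C.indicator (fun _ => r + r * ε ^ 2 / 8)) σ :=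
      (integrable_const _).indicator hCm
    have hg : ∫ x, ((r * ε - r * ε ^ 2 / 8) + C.indicator (fun _ => r + r * ε ^ 2 / 8) x) ∂σ =
        (r * ε - r * ε ^ 2 / 8) + p * (r + r * ε ^ 2 / 8) := by
      rw [integral_add (integrable_const _) hCint, integral_indicator_const _ hCm]
      simp [hp]
    rw [← hg]
    refine integral_mono_of_nonneg ?_ ((integrable_const _).add hCint) ?_
    · refine Filter.Eventually.of_forall fun x => ?_
      refine Set.indicator_nonneg ?_ x
      rintro x ⟨hx, -⟩
      rw [mem_closedBall'] at hx
      linarith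
    · filter_upwards [hae] with x hx
      have ha : 0 ≤ r * ε - r * ε ^ 2 / 8 := by
        have : 0 ≤ r * (ε * (1 - ε / 8)) := by
          have : 0 ≤ 1 - ε / 8 := by linarith
          positivity
        nlinarith
      by_cases hxC : x ∈ C
      · rw [Set.indicator_of_mem hxC]
        refine Set.indicator_apply_le' (fun _ => ?_) (fun _ => by positivity)
        have := dist_nonneg (x := z) (y := x)
        linarith
      · rw [Set.indicator_of_notMem hxC, add_zero]
        refine Set.indicator_apply_le' (fun _ => ?_) (fun _ => ha)
        have hxC : inner ℝ x z ≤ ε / 4 * r * ‖z‖ := not_lt.1 hxC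
        have : r * (1 + ε ^ 2 / 8) ≤ dist z x := by
          rw [dist_eq_norm]
          refine (sq_le_sq₀ (by positivity) (norm_nonneg _)).1 ?_
          rw [norm_sub_sq_real, real_inner_comm, hx]
          have h1 : (ε * r) * (ε * r / 2) ≤ ‖z‖ * (‖z‖ - ε * r / 2) := by
            have : 0 < ε * r := by positivity
            gcongr
            linarith
          have h2 : (1 + ε ^ 2 / 8) ^ 2 ≤ 1 + ε ^ 2 / 2 := by nlinarith [sq_nonneg ε]
          have h3 := mul_le_mul_of_nonneg_left h2 (sq_nonneg r)
          nlinarith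
        linarith
  rw [hI1]
  have hfin : p * (r + r * ε ^ 2 / 8) ≤
      r * √(π * m / 2) * (1 - ε ^ 2 / 16) ^ (((m : ℝ) - 2) / 2) := by
    calc p * (r + r * ε ^ 2 / 8) = r * (1 + ε ^ 2 / 8) * p := by ring
      _ ≤ _ := by
        gcongr
        nlinarith
  linarith
end
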